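/- Let ω > 0 and λ ∈ ℝ with −ω < λ < 0. Let μ : [0,∞) → ℝ be a twice differentiable function with μ(t) > 0 for all t ≥ 0, satisfying μ''(t) = 2λ/μ(t) + 1/μ(t)³ + ω² μ(t) for all t ≥ 0. Then μ is unbounded, and moreover there exist constants c, Cₑ > 0 and T ≥ 0 such that c·e^{ωt} ≤ μ(t) ≤ Cₑ·e^{ωt} for all t ≥ T. -/

import Mathlib

/-!
Writing `v = μ'`, the combination `w = v - ωμ` damps: `w' = -ωw + g` with `g = 2λ/μ + 1/μ³`.
By AM-GM, `2ω/μ ≤ 1/μ³ + ω²μ`, so for `λ > -ω` the right-hand side of the equation stays above a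
positive constant and `μ → ∞`. Hence `g` is eventually bounded, then so is `w`, and `μ' = ωμ + w`
is a bounded perturbation of `y' = ωy`. Grönwall's inequality for `μ` gives the upper bound; for
`-μ`, started once `μ` exceeds the bound on `w/ω`, it gives the lower one.
-/

open Asymptotics Filter

section LinearGrowth

variable {f f' : ℝ → ℝ}

theorem tendsto_atTop_of_eventually_le_deriv {η : ℝ} (hη : 0 < η)
    (hf : ∀ᶠ t in atTop, HasDerivAt f (f' t) t) (hle : ∀ᶠ t in atTop, η ≤ f' t) :
    Tendsto f atTop atTop := by
  obtain ⟨T, hT⟩ := (hf.and hle).exists_forall_of_atTop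
  have hgrowth : ∀ t ≥ T, f T + η * (t - T) ≤ f t := fun t ht ↦ by
    have hmvt := (convex_Ici T).mul_sub_le_image_sub_of_le_deriv
      (fun s hs ↦ (hT s hs).1.continuousAt.continuousWithinAt)
      (fun s hs ↦ (hT s (interior_subset hs)).1.differentiableAt.differentiableWithinAt)
      (fun s hs ↦ (hT s (interior_subset hs)).1.deriv ▸ (hT s (interior_subset hs)).2)
      T Set.self_mem_Ici t ht ht
    linarith
  refine tendsto_atTop_mono' _ ((eventually_ge_atTop T).mono hgrowth) ?_
  exact tendsto_atTop_add_const_left _ _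
    ((tendsto_atTop_add_const_right _ (-T) tendsto_id).const_mul_atTop hη)

theorem tendsto_atTop_of_eventually_le_second_deriv {f'' : ℝ → ℝ} {η : ℝ} (hη : 0 < η)
    (hf : ∀ᶠ t in atTop, HasDerivAt f (f' t) t) (hf' : ∀ᶠ t in atTop, HasDerivAt f' (f'' t) t)
    (hle : ∀ᶠ t in atTop, η ≤ f'' t) : Tendsto f atTop atTop :=
  tendsto_atTop_of_eventually_le_deriv one_pos hf
    ((tendsto_atTop_of_eventually_le_deriv hη hf' hle).eventually_ge_atTop 1)

end LinearGrowth

section LinearEquation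

variable {u g : ℝ → ℝ} {k δ ε T t : ℝ}

theorem le_gronwallBound_of_hasDerivAt {u' : ℝ → ℝ} (hu : ∀ s ≥ T, HasDerivAt u (u' s) s)
    (hδ : u T ≤ δ) (hle : ∀ s ≥ T, u' s ≤ k * u s + ε) (ht : T ≤ t) :
    u t ≤ gronwallBound δ k ε (t - T) :=
  le_gronwallBound_of_liminf_deriv_right_le
    (fun s hs ↦ (hu s hs.1).continuousAt.continuousWithinAt)
    (fun s hs _ hr ↦ (hu s hs.1).hasDerivWithinAt.liminf_right_slope_le hr) hδ
    (fun s hs ↦ hle s hs.1) t ⟨ht, le_rfl⟩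

theorem neg_le_gronwallBound_of_abs_le (hu : ∀ s ≥ T, HasDerivAt u (k * u s + g s) s)
    (hδ : -u T ≤ δ) (hg : ∀ s ≥ T, |g s| ≤ ε) (ht : T ≤ t) :
    -u t ≤ gronwallBound δ k ε (t - T) :=
  le_gronwallBound_of_hasDerivAt (u := fun s ↦ -u s) (fun s hs ↦ (hu s hs).fun_neg) hδ
    (fun s hs ↦ by linarith [neg_le_of_abs_le (hg s hs)]) ht

theorem abs_le_gronwallBound_of_abs_le (hu : ∀ s ≥ T, HasDerivAt u (k * u s + g s) s)
    (hδ : |u T| ≤ δ) (hg : ∀ s ≥ T, |g s| ≤ ε) (ht : T ≤ t) :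
    |u t| ≤ gronwallBound δ k ε (t - T) :=
  abs_le'.2
    ⟨le_gronwallBound_of_hasDerivAt hu ((le_abs_self _).trans hδ)
        (fun s hs ↦ by linarith [le_of_abs_le (hg s hs)]) ht,
      neg_le_gronwallBound_of_abs_le hu ((neg_le_abs _).trans hδ) hg ht⟩

theorem gronwallBound_le_of_neg {x : ℝ} (hδ : 0 ≤ δ) (hε : 0 ≤ ε) (hk : k < 0) (hx : 0 ≤ x) :
    gronwallBound δ k ε x ≤ δ + ε / -k := by
  have hexp : Real.exp (k * x) ≤ 1 :=
    Real.exp_le_one_iff.2 (mul_nonpos_of_nonpos_of_nonneg hk.le hx)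
  have hdiv : 0 ≤ ε / -k := div_nonneg hε (neg_nonneg.2 hk.le)
  rw [gronwallBound_of_K_ne_0 hk.ne]
  calc δ * Real.exp (k * x) + ε / k * (Real.exp (k * x) - 1)
      = δ * Real.exp (k * x) + ε / -k * (1 - Real.exp (k * x)) := by ring
    _ ≤ δ * 1 + ε / -k * 1 := by gcongr; linarith [Real.exp_pos (k * x)]
    _ = δ + ε / -k := by ring

theorem gronwallBound_le_of_pos (hε : 0 ≤ ε) (hk : 0 < k) :
    gronwallBound δ k ε (t - T) ≤
      (δ + ε / k) * Real.exp (-(k * T)) * Real.exp (k * t) := by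
  have hexp : Real.exp (k * (t - T)) = Real.exp (-(k * T)) * Real.exp (k * t) := by
    rw [← Real.exp_add]; ring_nf
  have hdiv : 0 ≤ ε / k := by positivity
  rw [gronwallBound_of_K_ne_0 hk.ne']
  linear_combination hdiv + (δ + ε / k) * hexp

theorem exists_forall_hasDerivAt_and_abs_le {u' : ℝ → ℝ}
    (hu : ∀ᶠ t in atTop, HasDerivAt u (u' t) t) (hg : g =O[atTop] (1 : ℝ → ℝ)) :
    ∃ ε > 0, ∀ᶠ T in atTop, (∀ t ≥ T, HasDerivAt u (u' t) t) ∧ ∀ t ≥ T, |g t| ≤ ε := by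
  obtain ⟨ε, hε, hgε⟩ := isBigO_iff'.1 hg
  refine ⟨ε, hε, (eventually_forall_ge_atTop.2 hu).and
    ((eventually_forall_ge_atTop.2 hgε).mono fun T hT t ht ↦ ?_)⟩
  simpa using hT t ht

theorem isBigO_one_of_hasDerivAt_of_neg (hk : k < 0)
    (hu : ∀ᶠ t in atTop, HasDerivAt u (k * u t + g t) t) (hg : g =O[atTop] (1 : ℝ → ℝ)) :
    u =O[atTop] (1 : ℝ → ℝ) := by
  obtain ⟨ε, hε, hT⟩ := exists_forall_hasDerivAt_and_abs_le hu hg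
  obtain ⟨T, huT, hgT⟩ := hT.exists
  refine .of_bound (|u T| + ε / -k) ((eventually_ge_atTop T).mono fun t ht ↦ ?_)
  simpa using (abs_le_gronwallBound_of_abs_le huT le_rfl hgT ht).trans
    (gronwallBound_le_of_neg (abs_nonneg _) hε.le hk (sub_nonneg.2 ht))

theorem isBigO_exp_of_hasDerivAt_of_pos (hk : 0 < k)
    (hu : ∀ᶠ t in atTop, HasDerivAt u (k * u t + g t) t) (hg : g =O[atTop] (1 : ℝ → ℝ)) :
    u =O[atTop] fun t ↦ Real.exp (k * t) := by
  obtain ⟨ε, hε, hT⟩ := exists_forall_hasDerivAt_and_abs_le hu hg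
  obtain ⟨T, huT, hgT⟩ := hT.exists
  refine .of_bound ((|u T| + ε / k) * Real.exp (-(k * T)))
    ((eventually_ge_atTop T).mono fun t ht ↦ ?_)
  simpa using (abs_le_gronwallBound_of_abs_le huT le_rfl hgT ht).trans
    (gronwallBound_le_of_pos hε.le hk)

theorem exp_isBigO_of_hasDerivAt_of_pos (hk : 0 < k)
    (hu : ∀ᶠ t in atTop, HasDerivAt u (k * u t + g t) t) (hg : g =O[atTop] (1 : ℝ → ℝ))
    (hlim : Tendsto u atTop atTop) :
    (fun t ↦ Real.exp (k * t)) =O[atTop] u := by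
  obtain ⟨ε, hε, hT⟩ := exists_forall_hasDerivAt_and_abs_le hu hg
  obtain ⟨T, ⟨huT, hgT⟩, hlarge⟩ := (hT.and (hlim.eventually_gt_atTop (ε / k))).exists
  refine isBigO_iff''.2 ⟨(u T - ε / k) * Real.exp (-(k * T)),
    mul_pos (sub_pos.2 hlarge) (Real.exp_pos _), (eventually_ge_atTop T).mono fun t ht ↦ ?_⟩
  have hneg : -u t ≤ (-u T + ε / k) * Real.exp (-(k * T)) * Real.exp (k * t) :=
    (neg_le_gronwallBound_of_abs_le huT le_rfl hgT ht).trans (gronwallBound_le_of_pos hε.le hk)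
  rw [Real.norm_eq_abs, Real.abs_exp, Real.norm_eq_abs]
  linarith [le_abs_self (u t)]

theorem isTheta_exp_of_hasDerivAt_second_order {x v : ℝ → ℝ} (hk : 0 < k)
    (hx : ∀ᶠ t in atTop, HasDerivAt x (v t) t)
    (hv : ∀ᶠ t in atTop, HasDerivAt v (k ^ 2 * x t + g t) t) (hg : g =O[atTop] (1 : ℝ → ℝ))
    (hlim : Tendsto x atTop atTop) :
    x =Θ[atTop] fun t ↦ Real.exp (k * t) := by
  have hw : (fun t ↦ v t - k * x t) =O[atTop] (1 : ℝ → ℝ) := by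
    refine isBigO_one_of_hasDerivAt_of_neg (neg_neg_of_pos hk) ?_ hg
    filter_upwards [hx, hv] with t hxt hvt
    exact (hvt.fun_sub (hxt.const_mul k)).congr_deriv (by ring)
  have hx' : ∀ᶠ t in atTop, HasDerivAt x (k * x t + (v t - k * x t)) t :=
    hx.mono fun t hxt ↦ hxt.congr_deriv (by ring)
  exact ⟨isBigO_exp_of_hasDerivAt_of_pos hk hx' hw,
    exp_isBigO_of_hasDerivAt_of_pos hk hx' hw hlim⟩

end LinearEquation

theorem exists_eventually_mul_le_and_le_mul_of_isTheta {α : Type*} {l : Filter α} {f g : α → ℝ}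
    (h : f =Θ[l] g) (hf : 0 ≤ᶠ[l] f) (hg : 0 ≤ᶠ[l] g) :
    ∃ c C : ℝ, 0 < c ∧ 0 < C ∧ ∀ᶠ t in l, c * g t ≤ f t ∧ f t ≤ C * g t := by
  obtain ⟨C, hC, hupper⟩ := isBigO_iff'.1 h.isBigO
  obtain ⟨c, hc, hlower⟩ := isBigO_iff''.1 h.symm.isBigO
  refine ⟨c, C, hc, hC, ?_⟩
  filter_upwards [hupper, hlower, hf, hg] with t hupper_t hlower_t hft hgt
  rw [Real.norm_of_nonneg hft, Real.norm_of_nonneg hgt] at hupper_t hlower_t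
  exact ⟨hlower_t, hupper_t⟩

section GaussianWidth

variable {lam om : ℝ}

theorem two_mul_div_le_one_div_cube_add {m : ℝ} (hm : 0 < m) :
    2 * om / m ≤ 1 / m ^ 3 + om ^ 2 * m := by
  have hsquare : 1 / m ^ 3 + om ^ 2 * m - 2 * om / m = (om * m ^ 2 - 1) ^ 2 / m ^ 3 := by
    field_simp
    ring
  exact sub_nonneg.1 (hsquare ▸ by positivity)

theorem min_one_sq_le_one_div_cube_add {m : ℝ} (hm : 0 < m) :
    min 1 (om ^ 2) ≤ 1 / m ^ 3 + om ^ 2 * m := by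
  rcases le_total m 1 with hm1 | hm1
  · calc min 1 (om ^ 2) ≤ 1 := min_le_left _ _
      _ ≤ 1 / m ^ 3 := one_le_one_div (by positivity) (pow_le_one₀ hm.le hm1)
      _ ≤ 1 / m ^ 3 + om ^ 2 * m := le_add_of_nonneg_right (by positivity)
  · calc min 1 (om ^ 2) ≤ om ^ 2 := min_le_right _ _
      _ ≤ om ^ 2 * m := le_mul_of_one_le_right (sq_nonneg _) hm1
      _ ≤ 1 / m ^ 3 + om ^ 2 * m := le_add_of_nonneg_left (by positivity)

theorem exists_pos_forall_le_width_force (hom : 0 < om) (hlam : -om < lam) :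
    ∃ η > 0, ∀ m : ℝ, 0 < m → η ≤ 2 * lam / m + 1 / m ^ 3 + om ^ 2 * m := by
  obtain ⟨θ, hθ0, hθ1, hθlam⟩ : ∃ θ : ℝ, 0 ≤ θ ∧ θ < 1 ∧ -(θ * om) ≤ lam := by
    refine ⟨max 0 (-lam / om), le_max_left _ _, max_lt one_pos ?_, neg_le.1 ?_⟩
    · rw [div_lt_one hom]
      linarith
    · exact (div_le_iff₀ hom).1 (le_max_right _ _)
  refine ⟨(1 - θ) * min 1 (om ^ 2), mul_pos (sub_pos.2 hθ1) (by positivity), fun m hm ↦ ?_⟩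
  have hlam_div : -(θ * (2 * om / m)) ≤ 2 * lam / m := by
    rw [← sub_nonneg]
    have hsum : 0 ≤ lam + θ * om := by linarith
    calc 0 ≤ 2 * (lam + θ * om) / m := by positivity
      _ = 2 * lam / m - -(θ * (2 * om / m)) := by ring
  calc (1 - θ) * min 1 (om ^ 2)
      ≤ (1 - θ) * (1 / m ^ 3 + om ^ 2 * m) :=
        mul_le_mul_of_nonneg_left (min_one_sq_le_one_div_cube_add hm) (sub_nonneg.2 hθ1.le)
    _ = -(θ * (1 / m ^ 3 + om ^ 2 * m)) + 1 / m ^ 3 + om ^ 2 * m := by ring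
    _ ≤ -(θ * (2 * om / m)) + 1 / m ^ 3 + om ^ 2 * m := by
        gcongr
        exact two_mul_div_le_one_div_cube_add hm
    _ ≤ 2 * lam / m + 1 / m ^ 3 + om ^ 2 * m := by gcongr

theorem tendsto_width_nonlinearity_atTop (lam : ℝ) :
    Tendsto (fun m : ℝ ↦ 2 * lam / m + 1 / m ^ 3) atTop (nhds 0) := by
  simpa only [add_zero, id_eq] using (tendsto_id.const_div_atTop (2 * lam)).add
    ((tendsto_pow_atTop three_ne_zero).const_div_atTop 1)

theorem tendsto_atTop_and_isTheta_exp_of_width_equation {x v : ℝ → ℝ} (hom : 0 < om)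
    (hlam : -om < lam) (hx : ∀ᶠ t in atTop, HasDerivAt x (v t) t)
    (hv : ∀ᶠ t in atTop,
      HasDerivAt v (2 * lam / x t + 1 / x t ^ 3 + om ^ 2 * x t) t)
    (hpos : ∀ᶠ t in atTop, 0 < x t) :
    Tendsto x atTop atTop ∧ x =Θ[atTop] fun t ↦ Real.exp (om * t) := by
  obtain ⟨η, hη, hforce⟩ := exists_pos_forall_le_width_force hom hlam
  have hlim : Tendsto x atTop atTop := tendsto_atTop_of_eventually_le_second_deriv hη hx hv
    (hpos.mono fun t ↦ hforce (x t))
  have hbounded : (fun t ↦ 2 * lam / x t + 1 / x t ^ 3) =O[atTop] (1 : ℝ → ℝ) :=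
    ((tendsto_width_nonlinearity_atTop lam).comp hlim).isBigO_one ℝ
  exact ⟨hlim, isTheta_exp_of_hasDerivAt_second_order hom hx
    (hv.mono fun t hvt ↦ hvt.congr_deriv (add_comm _ _)) hbounded hlim⟩

theorem stmt_19_general (hom : 0 < om) (hlam : -om < lam) (μ : ℝ → ℝ)
    (hd1 : ∀ t : ℝ, 0 ≤ t → DifferentiableAt ℝ μ t)
    (hd2 : ∀ t : ℝ, 0 ≤ t → DifferentiableAt ℝ (deriv μ) t)
    (hpos : ∀ t : ℝ, 0 ≤ t → 0 < μ t)
    (hODE : ∀ t : ℝ, 0 ≤ t →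
      deriv (deriv μ) t = 2 * lam / μ t + 1 / (μ t) ^ 3 + om ^ 2 * μ t) :
    (∀ M : ℝ, ∃ t : ℝ, 0 ≤ t ∧ M < μ t) ∧
    ∃ c Ce T : ℝ, 0 < c ∧ 0 < Ce ∧ 0 ≤ T ∧
      ∀ t : ℝ, T ≤ t →
        c * Real.exp (om * t) ≤ μ t ∧ μ t ≤ Ce * Real.exp (om * t) := by
  have hnonneg : ∀ᶠ t : ℝ in atTop, 0 ≤ t := eventually_ge_atTop 0
  have hμpos : ∀ᶠ t in atTop, 0 < μ t := hnonneg.mono hpos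
  obtain ⟨hlim, hΘ⟩ := tendsto_atTop_and_isTheta_exp_of_width_equation hom hlam
    (hnonneg.mono fun t ht ↦ (hd1 t ht).hasDerivAt)
    (hnonneg.mono fun t ht ↦ hODE t ht ▸ (hd2 t ht).hasDerivAt) hμpos
  obtain ⟨c, Ce, hc, hCe, hbounds⟩ := exists_eventually_mul_le_and_le_mul_of_isTheta hΘ
    (hμpos.mono fun _ ↦ le_of_lt) (.of_forall fun t ↦ (Real.exp_pos (om * t)).le)
  obtain ⟨T, hT, hboundsT⟩ := (hnonneg.and (eventually_forall_ge_atTop.2 hbounds)).exists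
  exact ⟨fun M ↦ (hnonneg.and (hlim.eventually_gt_atTop M)).exists,
    c, Ce, T, hc, hCe, hT, hboundsT⟩

end GaussianWidth

/-- In the regime `−ω < λ < 0 < ω`, every positive solution of
`μ'' = 2λ/μ + 1/μ³ + ω² μ` on `[0, ∞)` is unbounded, and in fact grows exactly like
`e^{ωt}`: there are `c, Cₑ > 0` and `T ≥ 0` with `c e^{ωt} ≤ μ(t) ≤ Cₑ e^{ωt}` for
all `t ≥ T`. -/
theorem stmt_19 (lam om : ℝ) (hom : 0 < om) (hlam1 : -om < lam) (hlam2 : lam < 0)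
    (μ : ℝ → ℝ)
    (hd1 : ∀ t : ℝ, 0 ≤ t → DifferentiableAt ℝ μ t)
    (hd2 : ∀ t : ℝ, 0 ≤ t → DifferentiableAt ℝ (deriv μ) t)
    (hpos : ∀ t : ℝ, 0 ≤ t → 0 < μ t)
    (hODE : ∀ t : ℝ, 0 ≤ t →
      deriv (deriv μ) t = 2 * lam / μ t + 1 / (μ t) ^ 3 + om ^ 2 * μ t) :
    (∀ M : ℝ, ∃ t : ℝ, 0 ≤ t ∧ M < μ t) ∧
    ∃ c Ce T : ℝ, 0 < c ∧ 0 < Ce ∧ 0 ≤ T ∧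
      ∀ t : ℝ, T ≤ t →
        c * Real.exp (om * t) ≤ μ t ∧ μ t ≤ Ce * Real.exp (om * t) :=
  stmt_19_general hom hlam1 μ hd1 hd2 hpos hODE
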